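/- Define N(m) = m XOR (2m) and α(m) = m XOR ⌊m/2⌋, and let e(k) denote the k-th evil number in increasing order (with e(0) = 0). Then: (1) for every j ≥ 1, the integer (N(j) − e(j)) − 2·(α(j) − j) lies in {−1, 0, 1}; and (2) for every j ∈ ℕ, ((N(2j) − e(2j)) − 2·(α(2j) − 2j)) + ((N(2j+1) − e(2j+1)) − 2·(α(2j+1) − (2j+1))) = 0, where all differences are computed in ℤ. -/

import Mathlib

/-- `N(m) = m XOR 2m`. -/
def nimDouble (m : ℕ) : ℕ := m ^^^ (2 * m)

/-- `α(m) = m XOR ⌊m/2⌋`. -/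
def grayCode (m : ℕ) : ℕ := m ^^^ (m / 2)

/-- A natural number is evil if its binary expansion has an even number of ones. -/
def Evil (n : ℕ) : Prop := Even ((Nat.digits 2 n).count 1)

/-- `e(k)`, the `k`-th smallest evil number (indexing from 0). -/
noncomputable def evilNth (k : ℕ) : ℕ := Nat.nth Evil k

theorem evil_double (k : ℕ) : Evil (2 * k) ↔ Evil k := by
  unfold Evil
  rcases Nat.eq_zero_or_pos k with rfl | h
  · simp
  · rw [Nat.digits_def' (by norm_num) (by omega : 0 < 2 * k)]
    have h1 : 2 * k % 2 = 0 := by omega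
    have h2 : 2 * k / 2 = k := by omega
    rw [h1, h2]
    simp

theorem evil_double_succ (k : ℕ) : Evil (2 * k + 1) ↔ ¬ Evil k := by
  unfold Evil
  rw [Nat.digits_def' (by norm_num) (by omega : 0 < 2 * k + 1)]
  have h1 : (2 * k + 1) % 2 = 1 := by omega
  have h2 : (2 * k + 1) / 2 = k := by omega
  rw [h1, h2, List.count_cons_self, Nat.even_add_one]

open Classical in
theorem count_evil (k : ℕ) : Nat.count Evil (2 * k) = k := by
  induction k with
  | zero => simp
  | succ n ih =>
    have : 2 * (n + 1) = 2 * n + 1 + 1 := by ring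
    rw [this, Nat.count_succ, Nat.count_succ, ih]
    by_cases h : Evil n <;> simp [evil_double, evil_double_succ, h]

open Classical in
theorem evilNth_eq (k : ℕ) : evilNth k = 2 * k + (if Evil k then 0 else 1) := by
  unfold evilNth
  by_cases h : Evil k
  · have := Nat.nth_count ((evil_double k).2 h)
    rw [count_evil] at this
    simpa [h] using this
  · have := Nat.nth_count ((evil_double_succ k).2 h)
    rw [Nat.count_succ, count_evil] at this
    simpa [h, evil_double] using this

theorem nimDouble_eq (j : ℕ) : nimDouble j = 2 * grayCode j + j % 2 := by
  unfold nimDouble grayCode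
  have h1 : (j ^^^ (2 * j)) / 2 = j ^^^ (j / 2) := by
    rw [Nat.xor_div_two, Nat.mul_div_cancel_left _ (by norm_num), Nat.xor_comm]
  have h2 : (j ^^^ (2 * j)) % 2 = j % 2 := by
    have := Nat.xor_mod_two_eq (m := j) (n := 2 * j)
    omega
  omega

theorem stmt_18 :
    (∀ j : ℕ, 1 ≤ j →
      ((nimDouble j : ℤ) - (evilNth j : ℤ)) - 2 * ((grayCode j : ℤ) - (j : ℤ)) ∈
        ({-1, 0, 1} : Set ℤ)) ∧
    (∀ j : ℕ,
      (((nimDouble (2 * j) : ℤ) - (evilNth (2 * j) : ℤ)) -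
          2 * ((grayCode (2 * j) : ℤ) - (2 * j : ℤ))) +
        (((nimDouble (2 * j + 1) : ℤ) - (evilNth (2 * j + 1) : ℤ)) -
          2 * ((grayCode (2 * j + 1) : ℤ) - (2 * j + 1 : ℤ))) = 0) := by
  constructor
  · intro j _
    have h1 := nimDouble_eq j
    have h2 := evilNth_eq j
    simp only [Set.mem_insert_iff, Set.mem_singleton_iff]
    split_ifs at h2 <;> omega
  · intro j
    have h1 := nimDouble_eq (2 * j)
    have h2 := evilNth_eq (2 * j)
    have h3 := nimDouble_eq (2 * j + 1)
    have h4 := evilNth_eq (2 * j + 1)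
    rw [evil_double] at h2
    rw [evil_double_succ] at h4
    by_cases h : Evil j <;> simp only [h, not_true_eq_false, not_false_eq_true, if_true, if_false] at h2 h4 <;> omega
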